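/- Let E be a real quadratic field of discriminant D > 12, assumed prime and ≡ 1 mod 4, with ring of integers ℴ. Let g = (a b; c d) ∈ SL₂(ℴ) be an elliptic element (trace t = a + d ∈ {0, ±1}) and let 𝔭 be a prime ideal of ℴ. Then it is impossible that c, a − d, and b all lie in 𝔭. -/

import Mathlib

/- STATEMENT 11: Let `E` be a real quadratic field of prime discriminant `D > 12`,
`D ≡ 1 mod 4`, with ring of integers `ℴ`.  If `g ∈ SL₂(ℴ)` is an elliptic element
(trace `0` or `±1`) and `𝔭` a prime ideal of `ℴ`, then `c`, `a − d`, `b` cannot all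
lie in `𝔭`. -/

theorem not_mem_sq_aux (E : Type*) [Field E] [NumberField E]
    (P : Ideal (NumberField.RingOfIntegers E)) [hP : P.IsPrime] (p D : ℤ) (hp : Prime p)
    (hdisc : NumberField.discr E = D) (hne : ¬ p ∣ D)
    (hmem : (p : NumberField.RingOfIntegers E) ∈ P ^ 2) : False := by
  have hbot : Ideal.span {p} ≠ (⊥ : Ideal ℤ) := by
    simpa using hp.ne_zero
  have hmax : (Ideal.span {p} : Ideal ℤ).IsMaximal :=
    ((Ideal.span_singleton_prime hp.ne_zero).mpr hp).isMaximal hbot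
  have h1 : P ^ (2 - 1) ∣ differentIdeal ℤ (NumberField.RingOfIntegers E) := by
    apply pow_sub_one_dvd_differentIdeal ℤ P 2 hbot
    rw [Ideal.dvd_iff_le, Ideal.map_span, Ideal.span_le]
    simpa using hmem
  rw [Ideal.dvd_iff_le] at h1
  have h2 : (D : NumberField.RingOfIntegers E) ∈ P := by
    have := h1 (NumberField.discr_mem_differentIdeal E (NumberField.RingOfIntegers E))
    simpa [hdisc] using this
  have h3 : (p : NumberField.RingOfIntegers E) ∈ P := Ideal.pow_le_self two_ne_zero hmem
  obtain ⟨u, v, huv⟩ := (Prime.coprime_iff_not_dvd hp).mpr hne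
  apply hP.ne_top
  rw [Ideal.eq_top_iff_one]
  have h4 := P.add_mem (P.mul_mem_left (u : NumberField.RingOfIntegers E) h3)
    (P.mul_mem_left (v : NumberField.RingOfIntegers E) h2)
  have h5 : (u * p + v * D : NumberField.RingOfIntegers E) = 1 := by exact_mod_cast huv
  rwa [h5] at h4

theorem elliptic_element_entries_not_all_in_prime
    (E : Type*) [Field E] [NumberField E]
    (hdeg : Module.finrank ℚ E = 2)
    (D : ℤ) (hD : Prime D) (hD4 : D % 4 = 1) (hD12 : 12 < D)
    (hdisc : NumberField.discr E = D)
    (g : Matrix (Fin 2) (Fin 2) (NumberField.RingOfIntegers E))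
    (hdet : g.det = 1)
    (htr : g.trace = 0 ∨ g.trace = 1 ∨ g.trace = -1)
    (𝔭 : Ideal (NumberField.RingOfIntegers E)) [𝔭.IsPrime] :
    ¬ (g 1 0 ∈ 𝔭 ∧ g 0 0 - g 1 1 ∈ 𝔭 ∧ g 0 1 ∈ 𝔭) := by
  rintro ⟨hc, had, hb⟩
  have hP : 𝔭.IsPrime := inferInstance
  rw [Matrix.det_fin_two] at hdet
  rw [Matrix.trace_fin_two] at htr
  generalize g 0 0 = a at *
  generalize g 0 1 = b at *
  generalize g 1 0 = c at *
  generalize g 1 1 = d at *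
  have h2D : ¬ (2 : ℤ) ∣ D := by omega
  have h3D : ¬ (3 : ℤ) ∣ D := by
    intro h
    have := (Int.prime_three.dvd_prime_iff_associated hD).mp h
    rw [Int.associated_iff] at this
    omega
  have hbc : b * c ∈ 𝔭 ^ 2 := by
    rw [pow_two]; exact Ideal.mul_mem_mul hb hc
  have hsq : (a - d) ^ 2 ∈ 𝔭 ^ 2 := Ideal.pow_mem_pow had 2
  have key : ∀ t, a + d = t → 4 - t ^ 2 ∈ 𝔭 ^ 2 := by
    intro t ht
    have : 4 - t ^ 2 = -(4 * (b * c) + (a - d) ^ 2) := by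
      subst ht; linear_combination (-4) * hdet
    rw [this]
    exact neg_mem (add_mem (Ideal.mul_mem_left _ _ hbc) hsq)
  rcases htr with h | h | h
  · have h4 := key 0 h
    have hle : 𝔭 ^ 2 ≤ 𝔭 := Ideal.pow_le_self two_ne_zero
    have h2 : (2 : NumberField.RingOfIntegers E) ∈ 𝔭 := by
      apply hP.mem_of_pow_mem 2
      have := hle h4
      norm_num at this ⊢
      exact this
    have ha1 : a + 1 ∈ 𝔭 := by
      apply hP.mem_of_pow_mem 2
      have : (a + 1) ^ 2 = 2 * a - b * c := by linear_combination a * h - hdet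
      rw [this]
      exact sub_mem (Ideal.mul_mem_right _ _ h2) (hle hbc)
    refine not_mem_sq_aux E 𝔭 2 D Int.prime_two hdisc h2D ?_
    have e : ((2 : ℤ) : NumberField.RingOfIntegers E)
        = -(a * (a + 1) ^ 2) + (-a - 2) * (b * c) := by
      push_cast
      linear_combination (a + 2) * (a * h - hdet)
    rw [e]
    exact add_mem (neg_mem (Ideal.mul_mem_left _ _ (Ideal.pow_mem_pow ha1 2)))
      (Ideal.mul_mem_left _ _ hbc)
  · have h4 := key 1 h
    refine not_mem_sq_aux E 𝔭 3 D Int.prime_three hdisc h3D ?_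
    norm_num at h4 ⊢
    exact h4
  · have h4 := key (-1) h
    refine not_mem_sq_aux E 𝔭 3 D Int.prime_three hdisc h3D ?_
    norm_num at h4 ⊢
    exact h4
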